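/- Let f, g, h : ℝ^d → ℝ be bounded measurable functions, let x ∈ ℝ^d and ℓ > 0. Then |τ̄_ℓ(f,g,h)(x)| ≤ 6 · δf(ℓ;x) · δg(ℓ;x) · δh(ℓ;x). -/

import Mathlib

/-!
The third cumulant is unchanged when a constant is added to one of its arguments, so each field may
be replaced by its increment `y ↦ a y - a x` (`tau3_sub_const` and the cyclic symmetry `tau3_rotate`).
Expanding `tau2`, the cumulant of the increments `F, G, H` is
`E[FGH] - E[F]E[GH] - E[G]E[FH] - E[H]E[FG] + 2 E[F]E[G]E[H]`,
where `E` is the average against the probability density `G_ℓ`, supported in the ball of radius `ℓ`.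
On that ball the increments are bounded by the suprema `δa(ℓ;x)`, so every average is bounded
by the product of the corresponding suprema (`abs_cg_le`), and the coefficients add up
to `1 + 3 + 2 = 6`.
-/


open MeasureTheory Metric
open scoped RealInnerProductSpace ENNReal

noncomputable section

abbrev Euc (d : ℕ) := EuclideanSpace ℝ (Fin d)

namespace QT

variable {d : ℕ}

/-- `G` is a mollifier: smooth, nonnegative, supported in the open unit ball, integral one. -/
structure IsMollifier {d : ℕ} (G : Euc d → ℝ) : Prop where
  smooth : ContDiff ℝ (⊤ : ℕ∞) G
  nonneg : ∀ r, 0 ≤ G r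
  supp : tsupport G ⊆ ball (0 : Euc d) 1
  integral_one : ∫ r, G r = 1

/-- The rescaled mollifier `G_ℓ(r) = ℓ^{-d} G(r/ℓ)`. -/
def resc (G : Euc d → ℝ) (ℓ : ℝ) (r : Euc d) : ℝ := (ℓ ^ d)⁻¹ * G (ℓ⁻¹ • r)

/-- Coarse-grained field `ā_ℓ(x) = ∫ G_ℓ(r) a(x+r) dr`. -/
def cg {E : Type*} [NormedAddCommGroup E] [NormedSpace ℝ E]
    (G : Euc d → ℝ) (ℓ : ℝ) (a : Euc d → E) (x : Euc d) : E :=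
  ∫ r, resc G ℓ r • a (x + r)

/-- Increment `δa(r;x) = a(x+r) - a(x)`. -/
def incr {E : Type*} [NormedAddCommGroup E] (a : Euc d → E) (r x : Euc d) : E :=
  a (x + r) - a x

/-- `δa(ℓ;x) = sup_{|r|<ℓ} |δa(r;x)|`. -/
def supIncr {E : Type*} [NormedAddCommGroup E] (a : Euc d → E) (ℓ : ℝ) (x : Euc d) : ℝ :=
  ⨆ r ∈ ball (0 : Euc d) ℓ, ‖incr a r x‖

/-- Second-order coarse-graining cumulant `τ̄_ℓ(f,g)`. -/
def tau2 (G : Euc d → ℝ) (ℓ : ℝ) (f g : Euc d → ℝ) (x : Euc d) : ℝ :=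
  cg G ℓ (fun y => f y * g y) x - cg G ℓ f x * cg G ℓ g x

/-- `τ̄_ℓ(ρ, v)` for a scalar density and a vector field. -/
def tauV (G : Euc d → ℝ) (ℓ : ℝ) (ρ : Euc d → ℝ) (v : Euc d → Euc d) (x : Euc d) : Euc d :=
  cg G ℓ (fun y => ρ y • v y) x - cg G ℓ ρ x • cg G ℓ v x

/-- `i`-th standard basis vector. -/
def e (d : ℕ) (i : Fin d) : Euc d := EuclideanSpace.single i (1 : ℝ)

/-- Partial derivative `∂_i f(x)`. -/
def pd (i : Fin d) (f : Euc d → ℝ) (x : Euc d) : ℝ := fderiv ℝ f x (e d i)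

/-- Laplacian. -/
def lap (f : Euc d → ℝ) (x : Euc d) : ℝ := ∑ i, pd i (fun y => pd i f y) x

/-- Gradient matrix `(∇v)_{ij} = ∂_i v_j`. -/
def gradMat (v : Euc d → Euc d) (x : Euc d) : Matrix (Fin d) (Fin d) ℝ :=
  Matrix.of fun i j => pd i (fun y => v y j) x

/-- Frobenius norm of a matrix. -/
def frobNorm (A : Matrix (Fin d) (Fin d) ℝ) : ℝ := Real.sqrt (∑ i, ∑ j, A i j ^ 2)

/-- Frobenius inner product `A : B`. -/
def frobInner (A B : Matrix (Fin d) (Fin d) ℝ) : ℝ := ∑ i, ∑ j, A i j * B i j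

/-- Favre-averaged velocity `ṽ_ℓ = \overline{(ρv)}_ℓ/ρ̄_ℓ` where `ρ̄_ℓ > 0`, `0` otherwise. -/
def favre (G : Euc d → ℝ) (ℓ : ℝ) (ρ : Euc d → ℝ) (v : Euc d → Euc d) (x : Euc d) : Euc d :=
  if 0 < cg G ℓ ρ x then (cg G ℓ ρ x)⁻¹ • cg G ℓ (fun y => ρ y • v y) x else 0

/-- Favre stress `τ̃_ℓ(v,v) = \overline{(ρ v⊗v)}_ℓ/ρ̄_ℓ − ṽ_ℓ ⊗ ṽ_ℓ`. -/
def favreStress (G : Euc d → ℝ) (ℓ : ℝ) (ρ : Euc d → ℝ) (v : Euc d → Euc d) (x : Euc d) :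
    Matrix (Fin d) (Fin d) ℝ :=
  Matrix.of fun i j =>
    (cg G ℓ ρ x)⁻¹ * cg G ℓ (fun y => ρ y * (v y i * v y j)) x
      - favre G ℓ ρ v x i * favre G ℓ ρ v x j

/-- Deformation work `Π_ℓ = −ρ̄_ℓ ∇ṽ_ℓ : τ̃_ℓ(v,v)`. -/
def deformWork (G : Euc d → ℝ) (ℓ : ℝ) (ρ : Euc d → ℝ) (v : Euc d → Euc d) (x : Euc d) : ℝ :=
  -(cg G ℓ ρ x * frobInner (gradMat (favre G ℓ ρ v) x) (favreStress G ℓ ρ v x))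

/-- The periodic box `[0,𝓛]^d`. -/
def box (d : ℕ) (L : ℝ) : Set (Euc d) := {x | ∀ i, x i ∈ Set.Icc (0 : ℝ) L}

/-- Normalized measure on the periodic box, so that `eLpNorm · p (boxMeasure d 𝓛)`
is the normalized `L^p` norm `(𝓛^{-d}∫_{[0,𝓛]^d}|f|^p)^{1/p}` (ess-sup for `p = ∞`). -/
def boxMeasure (d : ℕ) (L : ℝ) : Measure (Euc d) :=
  (ENNReal.ofReal (L ^ d))⁻¹ • (volume.restrict (box d L))

/-- `𝓛`-periodicity in each coordinate. -/
def PeriodicF {E : Type*} (L : ℝ) (f : Euc d → E) : Prop :=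
  ∀ (x : Euc d) (i : Fin d), f (x + EuclideanSpace.single i L) = f x

/-- Quantum stress `Σ = (ħ²/4m²)(Δρ)I − (ħ²/m²)∇√ρ ⊗ ∇√ρ`. -/
def qStress (hb m : ℝ) (ρ : Euc d → ℝ) (x : Euc d) : Matrix (Fin d) (Fin d) ℝ :=
  Matrix.of fun i j =>
    (hb ^ 2 / (4 * m ^ 2)) * lap ρ x * (if i = j then (1 : ℝ) else 0)
      - (hb ^ 2 / m ^ 2) * (gradient (fun y => Real.sqrt (ρ y)) x i
          * gradient (fun y => Real.sqrt (ρ y)) x j)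

/-- Coarse-grained quantum stress `Σ̄_ℓ`. -/
def cgStress (G : Euc d → ℝ) (ℓ hb m : ℝ) (ρ : Euc d → ℝ) (x : Euc d) :
    Matrix (Fin d) (Fin d) ℝ :=
  Matrix.of fun i j => cg G ℓ (fun z => qStress hb m ρ z i j) x

/-- Row-wise divergence of the coarse-grained quantum stress, `(∇·Σ̄_ℓ)_j = ∑_i ∂_i (Σ̄_ℓ)_{ij}`. -/
def divCgStress (G : Euc d → ℝ) (ℓ hb m : ℝ) (ρ : Euc d → ℝ) (x : Euc d) : Euc d :=
  (EuclideanSpace.equiv (Fin d) ℝ).symm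
    (fun j => ∑ i, pd i (fun y => cgStress G ℓ hb m ρ y i j) x)

/-- Quantum baropycnal work `Λ^{(Σ)}_ℓ = −(1/ρ̄_ℓ)(∇·Σ̄_ℓ)·τ̄_ℓ(ρ,v)`. -/
def qBaroWork (G : Euc d → ℝ) (ℓ hb m : ℝ) (ρ : Euc d → ℝ) (v : Euc d → Euc d) (x : Euc d) : ℝ :=
  -((cg G ℓ ρ x)⁻¹ * ⟪divCgStress G ℓ hb m ρ x, tauV G ℓ ρ v x⟫)

end QT

namespace QT

/-- Third-order coarse-graining cumulant `τ̄_ℓ(f,g,h)`. -/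
def tau3 (G : Euc d → ℝ) (ℓ : ℝ) (f g k : Euc d → ℝ) (x : Euc d) : ℝ :=
  cg G ℓ (fun y => f y * g y * k y) x
    - cg G ℓ f x * tau2 G ℓ g k x
    - cg G ℓ g x * tau2 G ℓ f k x
    - cg G ℓ k x * tau2 G ℓ f g x
    - cg G ℓ f x * cg G ℓ g x * cg G ℓ k x

end QT

namespace QT

variable {d : ℕ}

/-- Bounded measurable scalar fields. -/
def BddMeas (a : Euc d → ℝ) : Prop := Measurable a ∧ ∃ C, ∀ y, |a y| ≤ C

lemma BddMeas.mul {a b : Euc d → ℝ} (ha : BddMeas a) (hb : BddMeas b) :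
    BddMeas (fun y => a y * b y) := by
  obtain ⟨ham, A, hA⟩ := ha
  obtain ⟨hbm, B, hB⟩ := hb
  refine ⟨ham.mul hbm, A * B, fun y => ?_⟩
  rw [abs_mul]
  exact mul_le_mul (hA y) (hB y) (abs_nonneg _) ((abs_nonneg _).trans (hA y))

lemma BddMeas.sub_const {a : Euc d → ℝ} (ha : BddMeas a) (c : ℝ) :
    BddMeas (fun y => a y - c) := by
  obtain ⟨ham, A, hA⟩ := ha
  exact ⟨ham.sub_const c, A + |c|, fun y => (abs_sub _ _).trans (by linarith [hA y])⟩

section Mollifier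

variable {G : Euc d → ℝ} {ℓ : ℝ}

lemma IsMollifier.integrable_resc (hG : IsMollifier G) (hℓ : 0 < ℓ) :
    Integrable (resc G ℓ) := by
  have hi : Integrable G := by
    by_contra h
    simpa [integral_undef h] using hG.integral_one
  exact (hi.comp_smul (inv_ne_zero hℓ.ne')).const_mul _

lemma IsMollifier.integral_resc (hG : IsMollifier G) (hℓ : 0 < ℓ) :
    ∫ r, resc G ℓ r = 1 := by
  have hp : (0 : ℝ) < ℓ ^ d := pow_pos hℓ d
  simp only [resc]
  rw [integral_const_mul, Measure.integral_comp_inv_smul, hG.integral_one]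
  simp [abs_of_pos hℓ, hp.ne']

lemma IsMollifier.resc_nonneg (hG : IsMollifier G) (hℓ : 0 < ℓ) (r : Euc d) :
    0 ≤ resc G ℓ r :=
  mul_nonneg (inv_nonneg.2 (pow_pos hℓ d).le) (hG.nonneg _)

lemma IsMollifier.resc_eq_zero (hG : IsMollifier G) (hℓ : 0 < ℓ) {r : Euc d}
    (hr : r ∉ ball (0 : Euc d) ℓ) : resc G ℓ r = 0 := by
  have h : ℓ⁻¹ • r ∉ tsupport G := fun h => hr <| by
    have := hG.supp h
    rw [mem_ball_zero_iff, norm_smul, norm_inv, Real.norm_of_nonneg hℓ.le,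
      inv_mul_lt_iff₀ hℓ, mul_one] at this
    exact mem_ball_zero_iff.2 this
  rw [resc, image_eq_zero_of_notMem_tsupport h, mul_zero]

lemma IsMollifier.integrable_resc_smul (hG : IsMollifier G) (hℓ : 0 < ℓ) {a : Euc d → ℝ}
    (ha : BddMeas a) (x : Euc d) : Integrable (fun r => resc G ℓ r • a (x + r)) := by
  obtain ⟨ham, C, hC⟩ := ha
  exact (hG.integrable_resc hℓ).mul_bdd (c := C)
    (ham.comp (measurable_const_add x)).aestronglyMeasurable
    (Filter.Eventually.of_forall fun r => hC (x + r))

/-- The weight is a probability density carried by the ball of radius `ℓ`, so an average is at most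
any bound on that ball. -/
lemma abs_cg_le (hG : IsMollifier G) (hℓ : 0 < ℓ) {a : Euc d → ℝ} {x : Euc d} {M : ℝ}
    (hM : ∀ r ∈ ball (0 : Euc d) ℓ, |a (x + r)| ≤ M) : |cg G ℓ a x| ≤ M := by
  have h : ‖cg G ℓ a x‖ ≤ ∫ r, resc G ℓ r * M := by
    refine norm_integral_le_of_norm_le ((hG.integrable_resc hℓ).mul_const M)
      (Filter.Eventually.of_forall fun r => ?_)
    by_cases hr : r ∈ ball (0 : Euc d) ℓ
    · rw [norm_smul, Real.norm_of_nonneg (hG.resc_nonneg hℓ r)]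
      exact mul_le_mul_of_nonneg_left (hM r hr) (hG.resc_nonneg hℓ r)
    · simp [hG.resc_eq_zero hℓ hr]
  rwa [integral_mul_const, hG.integral_resc hℓ, one_mul] at h

lemma cg_sub_const_mul (hG : IsMollifier G) (hℓ : 0 < ℓ) {a b : Euc d → ℝ}
    (ha : BddMeas a) (hb : BddMeas b) (c : ℝ) (x : Euc d) :
    cg G ℓ (fun y => (a y - c) * b y) x = cg G ℓ (fun y => a y * b y) x - c * cg G ℓ b x := by
  unfold cg
  rw [← integral_const_mul, ← integral_sub (hG.integrable_resc_smul hℓ (ha.mul hb) x)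
    ((hG.integrable_resc_smul hℓ hb x).const_mul c)]
  congr 1 with r
  simp only [smul_eq_mul]
  ring

lemma cg_sub_const (hG : IsMollifier G) (hℓ : 0 < ℓ) {a : Euc d → ℝ}
    (ha : BddMeas a) (c : ℝ) (x : Euc d) :
    cg G ℓ (fun y => a y - c) x = cg G ℓ a x - c := by
  have h1 : cg G ℓ (fun _ => (1 : ℝ)) x = 1 := by simp [cg, hG.integral_resc hℓ]
  have hb : BddMeas (fun _ : Euc d => (1 : ℝ)) := ⟨measurable_const, 1, by simp⟩
  simpa [h1] using cg_sub_const_mul hG hℓ ha hb c x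

lemma tau3_sub_const (hG : IsMollifier G) (hℓ : 0 < ℓ) {f g k : Euc d → ℝ}
    (hf : BddMeas f) (hg : BddMeas g) (hk : BddMeas k) (c : ℝ) (x : Euc d) :
    tau3 G ℓ (fun y => f y - c) g k x = tau3 G ℓ f g k x := by
  simp only [tau3, tau2, mul_assoc, cg_sub_const hG hℓ hf, cg_sub_const_mul hG hℓ hf hg,
    cg_sub_const_mul hG hℓ hf hk, cg_sub_const_mul hG hℓ hf (hg.mul hk)]
  ring

lemma tau3_rotate (f g k : Euc d → ℝ) (x : Euc d) : tau3 G ℓ f g k x = tau3 G ℓ g k f x := by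
  have h1 : (fun y => g y * k y * f y) = fun y => f y * g y * k y := by ext y; ring
  have h2 : (fun y => k y * f y) = fun y => f y * k y := by ext y; ring
  have h3 : (fun y => g y * f y) = fun y => f y * g y := by ext y; ring
  simp only [tau3, tau2, h1, h2, h3]
  ring

/-- A bound for the third cumulant in terms of bounds on its arguments over the ball. -/
lemma abs_tau3_le_of_bound (hG : IsMollifier G) (hℓ : 0 < ℓ) {f g k : Euc d → ℝ} {x : Euc d}
    {A B C : ℝ} (hA : ∀ r ∈ ball (0 : Euc d) ℓ, |f (x + r)| ≤ A)
    (hB : ∀ r ∈ ball (0 : Euc d) ℓ, |g (x + r)| ≤ B)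
    (hC : ∀ r ∈ ball (0 : Euc d) ℓ, |k (x + r)| ≤ C) :
    |tau3 G ℓ f g k x| ≤ 6 * A * B * C := by
  have h0 : (0 : Euc d) ∈ ball (0 : Euc d) ℓ := mem_ball_self hℓ
  have A0 : 0 ≤ A := (abs_nonneg _).trans (hA 0 h0)
  have B0 : 0 ≤ B := (abs_nonneg _).trans (hB 0 h0)
  have mul_bd : ∀ {u v U V : ℝ}, 0 ≤ U → |u| ≤ U → |v| ≤ V → |u * v| ≤ U * V := by
    intro u v U V hU hu hv
    rw [abs_mul]
    exact mul_le_mul hu hv (abs_nonneg _) hU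
  have f1 := abs_cg_le hG hℓ hA
  have g1 := abs_cg_le hG hℓ hB
  have k1 := abs_cg_le hG hℓ hC
  have fg : |cg G ℓ (fun y => f y * g y) x| ≤ A * B :=
    abs_cg_le hG hℓ fun r hr => mul_bd A0 (hA r hr) (hB r hr)
  have fk : |cg G ℓ (fun y => f y * k y) x| ≤ A * C :=
    abs_cg_le hG hℓ fun r hr => mul_bd A0 (hA r hr) (hC r hr)
  have gk : |cg G ℓ (fun y => g y * k y) x| ≤ B * C :=
    abs_cg_le hG hℓ fun r hr => mul_bd B0 (hB r hr) (hC r hr)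
  have fgk : |cg G ℓ (fun y => f y * g y * k y) x| ≤ A * B * C :=
    abs_cg_le hG hℓ fun r hr =>
      mul_bd (mul_nonneg A0 B0) (mul_bd A0 (hA r hr) (hB r hr)) (hC r hr)
  have t1 := abs_le.1 (mul_bd A0 f1 gk)
  have t2 := abs_le.1 (mul_bd B0 g1 fk)
  have t3 := abs_le.1 (mul_bd (mul_nonneg A0 B0) fg k1)
  have t4 := abs_le.1 (mul_bd (mul_nonneg A0 B0) (mul_bd A0 f1 g1) k1)
  have t5 := abs_le.1 fgk
  simp only [tau3, tau2]
  rw [abs_le]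
  constructor <;> linarith

end Mollifier

/-- Boundedness of `a` makes the real-valued supremum `supIncr` an upper bound of the
increments. -/
lemma abs_sub_le_supIncr {a : Euc d → ℝ} {C : ℝ} (hC : ∀ y, |a y| ≤ C) (x : Euc d) {ℓ : ℝ}
    {r : Euc d} (hr : r ∈ ball (0 : Euc d) ℓ) : |a (x + r) - a x| ≤ supIncr a ℓ x := by
  have hinc : ∀ r, ‖incr a r x‖ ≤ C + C := fun r =>
    (norm_sub_le _ _).trans (add_le_add (hC _) (hC _))
  have h0 : 0 ≤ C + C := (norm_nonneg _).trans (hinc 0)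
  have hbdd : BddAbove (Set.range fun r : Euc d => ⨆ _ : r ∈ ball (0 : Euc d) ℓ, ‖incr a r x‖) := by
    refine ⟨C + C, ?_⟩
    rintro _ ⟨r, rfl⟩
    exact Real.iSup_le (fun _ => hinc r) h0
  have := le_ciSup hbdd r
  simp only [hr, ciSup_unique] at this
  exact this

end QT

open QT in
/-- `|τ̄_ℓ(f,g,h)(x)| ≤ 6 δf(ℓ;x) δg(ℓ;x) δh(ℓ;x)`. -/
theorem abs_tau3_le {d : ℕ} (hd : 1 ≤ d)
    (G : Euc d → ℝ) (hG : IsMollifier G)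
    (f g k : Euc d → ℝ) (hfm : Measurable f) (hgm : Measurable g) (hkm : Measurable k)
    (Cf Cg Ck : ℝ) (hfb : ∀ y, |f y| ≤ Cf) (hgb : ∀ y, |g y| ≤ Cg) (hkb : ∀ y, |k y| ≤ Ck)
    (x : Euc d) (ℓ : ℝ) (hℓ : 0 < ℓ) :
    |tau3 G ℓ f g k x| ≤ 6 * supIncr f ℓ x * supIncr g ℓ x * supIncr k ℓ x := by
  have hf : BddMeas f := ⟨hfm, Cf, hfb⟩
  have hg : BddMeas g := ⟨hgm, Cg, hgb⟩
  have hk : BddMeas k := ⟨hkm, Ck, hkb⟩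
  have hshift : tau3 G ℓ f g k x =
      tau3 G ℓ (fun y => f y - f x) (fun y => g y - g x) (fun y => k y - k x) x := by
    rw [tau3_sub_const hG hℓ hf (hg.sub_const _) (hk.sub_const _), tau3_rotate f (fun y => g y - g x),
      tau3_sub_const hG hℓ hg (hk.sub_const _) hf, tau3_rotate g (fun y => k y - k x),
      tau3_sub_const hG hℓ hk hf hg, tau3_rotate k f]
  rw [hshift]
  exact abs_tau3_le_of_bound hG hℓ (fun r hr => abs_sub_le_supIncr hfb x hr)
    (fun r hr => abs_sub_le_supIncr hgb x hr) (fun r hr => abs_sub_le_supIncr hkb x hr)
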